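/- Let A be an AWA and w ∈ Σ^ω. Then there is exactly one consistent sequence P_w = (Q₁⁰,{⪯⁰_C}_{C∈S})(Q₁¹,{⪯¹_C}_{C∈S})⋯ of families of total preorders whose first components form the unique sequence R_w. -/

import Mathlib

/-!
For a fixed SCC `C` both rules have the same shape. There are finite domains `P i` (`C ∩ Q₁ⁱ` or
`C \ Q₁ⁱ`) and monotone one-step conditions `f i q : Set Q → Prop`, and the rule says that `q ≺ q'`
at level `i` iff some strict initial segment of `P (i + 1)` satisfies the condition of `q` but not
the condition of `q'`. Define layers by `layer 0 i = ∅` and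
`layer (n + 1) i = {q ∈ P i | f i q (layer n (i + 1))}`. If the layers exhaust every `P i`, then
comparing states by the first layer containing them is consistent, and it is the only consistent
choice (`existsUnique_consistent`): by induction on `n`, layer `n` lies strictly below its complement
in every consistent sequence, and whatever lies strictly below a state of layer `n` enters the
layers strictly earlier.

It remains to see that the layers exhaust the domains. By finiteness of the state space it suffices
that every family `X i ⊆ P i` such that no state of `X i` satisfies its condition with
`P (i + 1) \ X (i + 1)` is empty (`exists_mem_layer`).
The main tool is memoryless determinacy in the form `exists_uniform_strategy`: one edge relation is
an accepting strategy simultaneously from all states of all `Q₁ⁱ`. It is obtained by enumerating the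
countably many accepting run DAGs and letting each vertex follow the first one that contains it; the
index cannot increase along a path, hence it stabilises. For a rejecting `C`, a nonempty `X` yields
a path of this strategy that never leaves `C`. For an accepting `C`, moving inside `Q₁ ∪ X` is an
accepting strategy, so that `X i ⊆ Q₁ⁱ`, although `X i` is disjoint from `Q₁ⁱ`.
-/

universe u v

/-- Positive Boolean formulas over `Q` (with constants tt and ff, connectives ∧ and ∨). -/
inductive PosBool (Q : Type u) : Type u
  | tt : PosBool Q
  | ff : PosBool Q
  | var : Q → PosBool Q
  | band : PosBool Q → PosBool Q → PosBool Q
  | bor : PosBool Q → PosBool Q → PosBool Q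

namespace PosBool

variable {Q : Type u}

/-- A set `Y` satisfies a positive Boolean formula. -/
def Sat (Y : Set Q) : PosBool Q → Prop
  | .tt => True
  | .ff => False
  | .var q => q ∈ Y
  | .band θ₁ θ₂ => Sat Y θ₁ ∧ Sat Y θ₂
  | .bor θ₁ θ₂ => Sat Y θ₁ ∨ Sat Y θ₂

/-- The states occurring in a formula. -/
def vars : PosBool Q → Set Q
  | .tt => ∅
  | .ff => ∅
  | .var q => {q}
  | .band θ₁ θ₂ => vars θ₁ ∪ vars θ₂
  | .bor θ₁ θ₂ => vars θ₁ ∪ vars θ₂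

/-- The dual formula: exchange tt with ff and ∧ with ∨. -/
def dual : PosBool Q → PosBool Q
  | .tt => .ff
  | .ff => .tt
  | .var q => .var q
  | .band θ₁ θ₂ => .bor (dual θ₁) (dual θ₂)
  | .bor θ₁ θ₂ => .band (dual θ₁) (dual θ₂)

end PosBool

/-- An alternating Büchi automaton with alphabet `α` and state space `Q`. -/
structure ABA (α : Type v) (Q : Type u) where
  init : Q
  delta : Q → α → PosBool Q
  acc : Set Q

namespace ABA

variable {α : Type v} {Q : Type u}

/-- The automaton `A^q`, i.e. `A` with initial state `q`. -/
def setInit (M : ABA α Q) (q : Q) : ABA α Q := { M with init := q }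

/-- Completeness: every transition formula is satisfiable. -/
def Complete (M : ABA α Q) : Prop := ∀ q a, PosBool.Sat (Set.univ : Set Q) (M.delta q a)

/-- Edge of the underlying graph. -/
def edge (M : ABA α Q) (q q' : Q) : Prop := ∃ a, q' ∈ PosBool.vars (M.delta q a)

/-- Reachability in the underlying graph. -/
def reach (M : ABA α Q) : Q → Q → Prop := Relation.ReflTransGen M.edge

/-- The strongly connected component of a state. -/
def sccOf (M : ABA α Q) (q : Q) : Set Q := {q' | M.reach q q' ∧ M.reach q' q}

/-- `C` is an SCC of the underlying graph. -/
def IsSCC (M : ABA α Q) (C : Set Q) : Prop := ∃ q, C = M.sccOf q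

/-- A weak alternating automaton: every SCC is accepting or rejecting. -/
def IsWeak (M : ABA α Q) : Prop := ∀ q : Q, M.sccOf q ⊆ M.acc ∨ M.sccOf q ∩ M.acc = ∅

/-- The dual automaton. -/
def dual (M : ABA α Q) : ABA α Q where
  init := M.init
  delta := fun q a => (M.delta q a).dual
  acc := M.accᶜ

/-- A run DAG of `M` over the ω-word `w`. -/
structure RunDAG (M : ABA α Q) (w : ℕ → α) where
  V : ℕ → Set Q
  E : ℕ → Q → Q → Prop
  init_mem : M.init ∈ V 0
  edge_src : ∀ ℓ q q', E ℓ q q' → q ∈ V ℓ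
  edge_tgt : ∀ ℓ q q', E ℓ q q' → q' ∈ V (ℓ + 1)
  sat : ∀ ℓ q, q ∈ V ℓ → PosBool.Sat {q' | E ℓ q q'} (M.delta q (w ℓ))

/-- An ω-branch of a run DAG. -/
def RunDAG.IsBranch {M : ABA α Q} {w : ℕ → α} (G : M.RunDAG w) (b : ℕ → Q) : Prop :=
  b 0 = M.init ∧ ∀ ℓ, G.E ℓ (b ℓ) (b (ℓ + 1))

/-- A run DAG is accepting if every ω-branch visits accepting states infinitely often. -/
def RunDAG.Accepting {M : ABA α Q} {w : ℕ → α} (G : M.RunDAG w) : Prop :=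
  ∀ b, G.IsBranch b → ∀ n, ∃ m, n ≤ m ∧ b m ∈ M.acc

/-- `M` accepts `w` if there is an accepting run DAG of `M` over `w`. -/
def Accepts (M : ABA α Q) (w : ℕ → α) : Prop := ∃ G : M.RunDAG w, G.Accepting

/-- The language of `M`. -/
def lang (M : ABA α Q) : Set (ℕ → α) := {w | M.Accepts w}

/-- `R`: the union of the rejecting SCCs. -/
def RejPart (M : ABA α Q) : Set Q := {q | M.sccOf q ∩ M.acc = ∅}

/-- `Acc`: the union of the accepting SCCs. -/
def AccPart (M : ABA α Q) : Set Q := {q | M.sccOf q ⊆ M.acc}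

end ABA

/-- The suffix `w[i⋯]` of an ω-word. -/
def suffix {α : Type v} (w : ℕ → α) (i : ℕ) : ℕ → α := fun n => w (i + n)

/-- `Q_w = {s ∈ Q | w ∈ L(A^s)}`. -/
def QSet {α : Type v} {Q : Type u} (M : ABA α Q) (w : ℕ → α) : Set Q :=
  {s | w ∈ (M.setInit s).lang}

/-- The unique sequence `R_w`, i.e. `i ↦ Q_{w[i⋯]}`. -/
def QSeq {α : Type v} {Q : Type u} (M : ABA α Q) (w : ℕ → α) (i : ℕ) : Set Q :=
  QSet M (suffix w i)

/-- A nondeterministic Büchi automaton. -/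
structure NBA (α : Type v) (P : Type u) where
  init : Set P
  delta : P → α → Set P
  acc : Set P

namespace NBA

variable {α : Type v} {P : Type u}

/-- A macrorun of `N` over `w`. -/
def IsMacrorun (N : NBA α P) (w : ℕ → α) (ρ : ℕ → P) : Prop :=
  ρ 0 ∈ N.init ∧ ∀ i, ρ (i + 1) ∈ N.delta (ρ i) (w i)

/-- An accepting macrorun of `N` over `w`. -/
def IsAccMacrorun (N : NBA α P) (w : ℕ → α) (ρ : ℕ → P) : Prop :=
  N.IsMacrorun w ρ ∧ ∀ n, ∃ m, n ≤ m ∧ ρ m ∈ N.acc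

/-- The language of an NBA. -/
def lang (N : NBA α P) : Set (ℕ → α) := {w | ∃ ρ, N.IsAccMacrorun w ρ}

/-- `N^m`: the NBA `N` with set of initial states `{m}`. -/
def fromState (N : NBA α P) (p : P) : NBA α P := { N with init := {p} }

/-- An NBA is unambiguous if it has at most one accepting macrorun over every word. -/
def Unambiguous (N : NBA α P) : Prop :=
  ∀ w ρ₁ ρ₂, N.IsAccMacrorun w ρ₁ → N.IsAccMacrorun w ρ₂ → ρ₁ = ρ₂

end NBA

/-- Macrostates of the Bustan–Rubin–Vardi construction: tuples `(Q₁, Q₂, Q₃, Q₄)`. -/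
abbrev BRVState (Q : Type u) := Set Q × Set Q × Set Q × Set Q

/-- Consistency of a BRV tuple: `Q₂ = Q∖Q₁`, `Q₃ ⊆ Q₁∖F`, `Q₄ ⊆ Q₂∖F̂`. -/
def BRVConsistent {α : Type v} {Q : Type u} (M : ABA α Q) (m : BRVState Q) : Prop :=
  m.2.1 = m.1ᶜ ∧ m.2.2.1 ⊆ m.1 \ M.acc ∧ m.2.2.2 ⊆ m.2.1 \ M.dual.acc

/-- The Bustan–Rubin–Vardi NBA `B` constructed from an AWA. -/
def BRV {α : Type v} {Q : Type u} (M : ABA α Q) : NBA α (BRVState Q) where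
  init := {m | BRVConsistent M m ∧ M.init ∈ m.1}
  delta := fun m σ =>
    {m' | BRVConsistent M m ∧ BRVConsistent M m' ∧
      (∀ s ∈ m.1, PosBool.Sat m'.1 (M.delta s σ)) ∧
      (∀ s ∈ m.2.1, PosBool.Sat m'.2.1 (M.dual.delta s σ)) ∧
      ((m.2.2.1 = ∅ ∧ m.2.2.2 = ∅ ∧ m'.2.2.1 = m'.1 \ M.acc ∧ m'.2.2.2 = m'.2.1 \ M.dual.acc) ∨
       ((m.2.2.1 ≠ ∅ ∨ m.2.2.2 ≠ ∅) ∧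
        (∃ Y₃ ⊆ m'.1, (∀ s ∈ m.2.2.1, PosBool.Sat Y₃ (M.delta s σ)) ∧ m'.2.2.1 = Y₃ \ M.acc) ∧
        (∃ Y₄ ⊆ m'.2.1, (∀ s ∈ m.2.2.2, PosBool.Sat Y₄ (M.dual.delta s σ)) ∧
          m'.2.2.2 = Y₄ \ M.dual.acc)))}
  acc := {m | BRVConsistent M m ∧ m.2.2.1 = ∅ ∧ m.2.2.2 = ∅}

/-- The domain of the distance function at level `i`: `(Q₁ⁱ ∩ R) ∪ (Acc ∖ Q₁ⁱ)`. -/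
def DistDom {α : Type v} {Q : Type u} (M : ABA α Q) (QS : ℕ → Set Q) (i : ℕ) : Set Q :=
  (QS i ∩ M.RejPart) ∪ (M.AccPart \ QS i)

/-- Consistency of a sequence of distance functions (Rules R1 and R2). -/
def ConsistentDist {α : Type v} {Q : Type u} (M : ABA α Q) (w : ℕ → α)
    (QS : ℕ → Set Q) (d : ℕ → Q → ℕ) : Prop :=
  ∀ i : ℕ,
    (∀ p ∈ M.RejPart ∩ QS i,
      PosBool.Sat ((QS (i + 1) \ M.sccOf p) ∪
        {q | q ∈ M.sccOf p ∩ QS (i + 1) ∧ d (i + 1) q ≤ d i p - 1}) (M.delta p (w i)) ∧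
      (1 < d i p →
        ¬ PosBool.Sat ((QS (i + 1) \ M.sccOf p) ∪
          {q | q ∈ M.sccOf p ∩ QS (i + 1) ∧ d (i + 1) q ≤ d i p - 2}) (M.delta p (w i)))) ∧
    (∀ p ∈ M.AccPart \ QS i,
      PosBool.Sat ((QS (i + 1) ∪ M.sccOf p)ᶜ ∪
        {q | q ∈ M.sccOf p \ QS (i + 1) ∧ d (i + 1) q ≤ d i p - 1}) (M.dual.delta p (w i)) ∧
      (1 < d i p →
        ¬ PosBool.Sat ((QS (i + 1) ∪ M.sccOf p)ᶜ ∪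
          {q | q ∈ M.sccOf p \ QS (i + 1) ∧ d (i + 1) q ≤ d i p - 2}) (M.dual.delta p (w i))))

/-- Strict part of a preorder. -/
def StrictOf {Q : Type u} (le : Q → Q → Prop) (p q : Q) : Prop := le p q ∧ ¬ le q p

/-- `le` is a total preorder on `D` (as a relation over `D × D`). -/
def IsTotalPreorderOn {Q : Type u} (D : Set Q) (le : Q → Q → Prop) : Prop :=
  (∀ p q, le p q → p ∈ D ∧ q ∈ D) ∧ (∀ p ∈ D, le p p) ∧
  (∀ p q r, le p q → le q r → le p r) ∧ (∀ p ∈ D, ∀ q ∈ D, le p q ∨ le q p)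

/-- `D` is downwards closed w.r.t. `le` inside the domain `Dom`. -/
def DownClosed {Q : Type u} (le : Q → Q → Prop) (Dom D : Set Q) : Prop :=
  D ⊆ Dom ∧ ∀ q ∈ D, ∀ q', le q' q → q' ∈ D

/-- The set of maximal elements of a preorder on the domain `Dom`. -/
def MaxSet {Q : Type u} (le : Q → Q → Prop) (Dom : Set Q) : Set Q :=
  {q | q ∈ Dom ∧ ∀ q' ∈ Dom, ¬ StrictOf le q q'}

/-- Rule R1' for a rejecting SCC `C`, letter `σ`, sets `Q₁, Q₁'` and preorders `le, le'`. -/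
def RuleR1 {α : Type v} {Q : Type u} (M : ABA α Q) (C : Set Q) (σ : α)
    (Q1 Q1' : Set Q) (le le' : Q → Q → Prop) : Prop :=
  ∀ q ∈ C ∩ Q1, ∀ q' ∈ C ∩ Q1,
    (StrictOf le q q' ↔ ∃ r ∈ C ∩ Q1',
      PosBool.Sat ({r' | r' ∈ C ∩ Q1' ∧ StrictOf le' r' r} ∪ (Q1' \ C)) (M.delta q σ) ∧
      ¬ PosBool.Sat ({r' | r' ∈ C ∩ Q1' ∧ StrictOf le' r' r} ∪ (Q1' \ C)) (M.delta q' σ))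

/-- Rule R2' for an accepting SCC `C`, letter `σ`, sets `Q₁, Q₁'` and preorders `le, le'`. -/
def RuleR2 {α : Type v} {Q : Type u} (M : ABA α Q) (C : Set Q) (σ : α)
    (Q1 Q1' : Set Q) (le le' : Q → Q → Prop) : Prop :=
  ∀ q ∈ C \ Q1, ∀ q' ∈ C \ Q1,
    (StrictOf le q q' ↔ ∃ r ∈ C \ Q1',
      PosBool.Sat ({r' | r' ∈ C \ Q1' ∧ StrictOf le' r' r} ∪ (Q1' ∪ C)ᶜ) (M.dual.delta q σ) ∧
      ¬ PosBool.Sat ({r' | r' ∈ C \ Q1' ∧ StrictOf le' r' r} ∪ (Q1' ∪ C)ᶜ) (M.dual.delta q' σ))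

/-- Consistency of a sequence of families of total preorders (Rules R1' and R2'). -/
def ConsistentPre {α : Type v} {Q : Type u} (M : ABA α Q) (w : ℕ → α)
    (QS : ℕ → Set Q) (pre : ℕ → Set Q → Q → Q → Prop) : Prop :=
  ∀ i C, M.IsSCC C →
    (C ⊆ M.RejPart →
      IsTotalPreorderOn (C ∩ QS i) (pre i C) ∧
      RuleR1 M C (w i) (QS i) (QS (i + 1)) (pre i C) (pre (i + 1) C)) ∧
    (C ⊆ M.AccPart →
      IsTotalPreorderOn (C \ QS i) (pre i C) ∧
      RuleR2 M C (w i) (QS i) (QS (i + 1)) (pre i C) (pre (i + 1) C))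

/-- Macrostates of the `B_u` construction: `(Q₁, Q₂, {⪯_C}_{C∈S}, S, D)`. -/
abbrev BuState (Q : Type u) := Set Q × Set Q × (Set Q → Q → Q → Prop) × Set Q × Set Q

def BuState.q1 {Q : Type u} (m : BuState Q) : Set Q := m.1
def BuState.q2 {Q : Type u} (m : BuState Q) : Set Q := m.2.1
def BuState.pre {Q : Type u} (m : BuState Q) : Set Q → Q → Q → Prop := m.2.2.1
def BuState.sS {Q : Type u} (m : BuState Q) : Set Q := m.2.2.2.1
def BuState.dD {Q : Type u} (m : BuState Q) : Set Q := m.2.2.2.2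

/-- Well-formedness of a `B_u` macrostate. -/
def BuWF {α : Type v} {Q : Type u} (M : ABA α Q) (m : BuState Q) : Prop :=
  m.q2 = m.q1ᶜ ∧
  (∀ C, M.IsSCC C →
    (C ⊆ M.RejPart → IsTotalPreorderOn (m.q1 ∩ C) (m.pre C)) ∧
    (C ⊆ M.AccPart → IsTotalPreorderOn (m.q2 ∩ C) (m.pre C))) ∧
  (∀ C, ¬ M.IsSCC C → m.pre C = fun _ _ => False) ∧
  M.IsSCC m.sS ∧
  (m.sS ⊆ M.RejPart → DownClosed (m.pre m.sS) (m.q1 ∩ m.sS) m.dD) ∧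
  (m.sS ⊆ M.AccPart → DownClosed (m.pre m.sS) (m.q2 ∩ m.sS) m.dD)

/-- The NBA `B_u` constructed from an AWA `M`, a round-robin successor `next` on SCCs
and an initial SCC `C₀`. -/
def Bu {α : Type v} {Q : Type u} (M : ABA α Q) (next : Set Q → Set Q) (C0 : Set Q) :
    NBA α (BuState Q) where
  init := {m | BuWF M m ∧ M.init ∈ m.q1 ∧ m.sS = C0 ∧ m.dD = ∅}
  delta := fun m σ =>
    {m' | BuWF M m ∧ BuWF M m' ∧
      (∀ s ∈ m.q1, PosBool.Sat m'.q1 (M.delta s σ)) ∧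
      (∀ s ∈ m.q2, PosBool.Sat m'.q2 (M.dual.delta s σ)) ∧
      (∀ C, M.IsSCC C →
        (C ⊆ M.RejPart → RuleR1 M C σ m.q1 m'.q1 (m.pre C) (m'.pre C)) ∧
        (C ⊆ M.AccPart → RuleR2 M C σ m.q1 m'.q1 (m.pre C) (m'.pre C))) ∧
      (m.dD = ∅ → m'.sS = next m.sS ∧
        (m'.sS ⊆ M.RejPart → m'.dD = m'.q1 ∩ m'.sS) ∧
        (m'.sS ⊆ M.AccPart → m'.dD = m'.q2 ∩ m'.sS)) ∧
      (m.dD ≠ ∅ → m'.sS = m.sS ∧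
        (m.sS ⊆ M.RejPart →
          (∀ s ∈ m.dD, PosBool.Sat (m'.dD ∪ (m'.q1 \ m.sS)) (M.delta s σ)) ∧
          (∀ D'', DownClosed (m'.pre m.sS) (m'.q1 ∩ m.sS) D'' →
            (∀ s ∈ m.dD, PosBool.Sat (D'' ∪ (m'.q1 \ m.sS)) (M.delta s σ)) → m'.dD ⊆ D'')) ∧
        (m.sS ⊆ M.AccPart →
          (∀ s ∈ m.dD, PosBool.Sat (m'.dD ∪ (m'.q2 \ m.sS)) (M.dual.delta s σ)) ∧
          (∀ D'', DownClosed (m'.pre m.sS) (m'.q2 ∩ m.sS) D'' →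
            (∀ s ∈ m.dD, PosBool.Sat (D'' ∪ (m'.q2 \ m.sS)) (M.dual.delta s σ)) → m'.dD ⊆ D'')))}
  acc := {m | BuWF M m ∧ m.dD = ∅}

/-- Macrostates of the `U` construction: `(Q₁, Q₂, ⪯_C, C, D)`. -/
abbrev UState (Q : Type u) := Set Q × Set Q × (Q → Q → Prop) × Set Q × Set Q

def UState.q1 {Q : Type u} (m : UState Q) : Set Q := m.1
def UState.q2 {Q : Type u} (m : UState Q) : Set Q := m.2.1
def UState.pre {Q : Type u} (m : UState Q) : Q → Q → Prop := m.2.2.1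
def UState.cC {Q : Type u} (m : UState Q) : Set Q := m.2.2.2.1
def UState.dD {Q : Type u} (m : UState Q) : Set Q := m.2.2.2.2

/-- Well-formedness of a `U` macrostate. -/
def UWF {α : Type v} {Q : Type u} (M : ABA α Q) (m : UState Q) : Prop :=
  m.q2 = m.q1ᶜ ∧ M.IsSCC m.cC ∧
  (m.cC ⊆ M.RejPart →
    IsTotalPreorderOn (m.q1 ∩ m.cC) m.pre ∧
    (m.dD = m.q1 ∩ m.cC ∨ m.dD = (m.q1 ∩ m.cC) \ MaxSet m.pre (m.q1 ∩ m.cC))) ∧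
  (m.cC ⊆ M.AccPart →
    IsTotalPreorderOn (m.q2 ∩ m.cC) m.pre ∧
    (m.dD = m.q2 ∩ m.cC ∨ m.dD = (m.q2 ∩ m.cC) \ MaxSet m.pre (m.q2 ∩ m.cC)))

/-- The NBA `U` constructed from an AWA `M`, a round-robin successor `next` on SCCs
and an initial SCC `C₀`. -/
def Uaut {α : Type v} {Q : Type u} (M : ABA α Q) (next : Set Q → Set Q) (C0 : Set Q) :
    NBA α (UState Q) where
  init := {m | UWF M m ∧ M.init ∈ m.q1 ∧ m.cC = C0 ∧ m.dD = ∅}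
  delta := fun m σ =>
    {m' | UWF M m ∧ UWF M m' ∧
      (∀ s ∈ m.q1, PosBool.Sat m'.q1 (M.delta s σ)) ∧
      (∀ s ∈ m.q2, PosBool.Sat m'.q2 (M.dual.delta s σ)) ∧
      (m.dD = ∅ → m'.cC = next m.cC ∧
        (m'.cC ⊆ M.RejPart → m'.dD = m'.q1 ∩ m'.cC) ∧
        (m'.cC ⊆ M.AccPart → m'.dD = m'.q2 ∩ m'.cC)) ∧
      (m.dD ≠ ∅ → m'.cC = m.cC ∧
        (m.cC ⊆ M.RejPart →
          RuleR1 M m.cC σ m.q1 m'.q1 m.pre m'.pre ∧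
          DownClosed m'.pre (m'.q1 ∩ m.cC) m'.dD ∧
          (∀ s ∈ m.dD, PosBool.Sat (m'.dD ∪ (m'.q1 \ m.cC)) (M.delta s σ)) ∧
          (∀ D'', DownClosed m'.pre (m'.q1 ∩ m.cC) D'' →
            (∀ s ∈ m.dD, PosBool.Sat (D'' ∪ (m'.q1 \ m.cC)) (M.delta s σ)) → m'.dD ⊆ D'')) ∧
        (m.cC ⊆ M.AccPart →
          RuleR2 M m.cC σ m.q1 m'.q1 m.pre m'.pre ∧
          DownClosed m'.pre (m'.q2 ∩ m.cC) m'.dD ∧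
          (∀ s ∈ m.dD, PosBool.Sat (m'.dD ∪ (m'.q2 \ m.cC)) (M.dual.delta s σ)) ∧
          (∀ D'', DownClosed m'.pre (m'.q2 ∩ m.cC) D'' →
            (∀ s ∈ m.dD, PosBool.Sat (D'' ∪ (m'.q2 \ m.cC)) (M.dual.delta s σ)) → m'.dD ⊆ D'')))}
  acc := {m | UWF M m ∧ m.dD = ∅}

/-- `tpo n`: the number of total preorders on an `n`-element set. -/
noncomputable def tpo (n : ℕ) : ℕ :=
  Nat.card {r : Fin n → Fin n → Prop // Reflexive r ∧ Transitive r ∧ ∀ a b, r a b ∨ r b a}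

/-! ### Positive Boolean formulas -/

theorem PosBool.Sat.mono {Q : Type*} {Y Z : Set Q} (h : Y ⊆ Z) :
    ∀ {θ : PosBool Q}, PosBool.Sat Y θ → PosBool.Sat Z θ
  | .tt, _ => trivial
  | .ff, hθ => hθ
  | .var _, hθ => h hθ
  | .band _ _, hθ => ⟨PosBool.Sat.mono h hθ.1, PosBool.Sat.mono h hθ.2⟩
  | .bor _ _, hθ => hθ.imp (PosBool.Sat.mono h) (PosBool.Sat.mono h)

theorem PosBool.sat_dual_compl {Q : Type*} (Y : Set Q) (θ : PosBool Q) :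
    PosBool.Sat Yᶜ θ.dual ↔ ¬ PosBool.Sat Y θ := by
  induction θ with
  | tt => simp [PosBool.dual, PosBool.Sat]
  | ff => simp [PosBool.dual, PosBool.Sat]
  | var q => simp [PosBool.dual, PosBool.Sat]
  | band a b iha ihb => simp only [PosBool.dual, PosBool.Sat, iha, ihb]; tauto
  | bor a b iha ihb => simp only [PosBool.dual, PosBool.Sat, iha, ihb]; tauto

/-! ### Layered preorders -/

section Layers

variable {Q : Type*} (P : ℕ → Set Q) (f : ℕ → Q → Set Q → Prop)

/-- `layer P f n i` is the set of states of `P i` whose one-step conditions can be unfolded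
completely within `n` steps starting from level `i`. -/
def layer : ℕ → ℕ → Set Q
  | 0, _ => ∅
  | n + 1, i => {q | q ∈ P i ∧ f i q (layer n (i + 1))}

/-- The common form of both rules: `le i` is a total preorder on `P i`, and `q` lies strictly below
`q'` iff a strict initial segment at level `i + 1` satisfies the condition of `q` but not that
of `q'`. -/
def ConsistentFor (le : ℕ → Q → Q → Prop) : Prop :=
  ∀ i, IsTotalPreorderOn (P i) (le i) ∧
    ∀ q ∈ P i, ∀ q' ∈ P i, (StrictOf (le i) q q' ↔
      ∃ r ∈ P (i + 1), f i q {r' | r' ∈ P (i + 1) ∧ StrictOf (le (i + 1)) r' r} ∧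
        ¬ f i q' {r' | r' ∈ P (i + 1) ∧ StrictOf (le (i + 1)) r' r})

variable {P f}

theorem layer_subset (n i : ℕ) : layer P f n i ⊆ P i := by
  cases n with
  | zero => exact Set.empty_subset _
  | succ n => exact fun q hq => hq.1

theorem layer_succ (hf : ∀ i q Y Z, Y ⊆ Z → f i q Y → f i q Z) (n : ℕ) :
    ∀ i, layer P f n i ⊆ layer P f (n + 1) i := by
  induction n with
  | zero => exact fun i => Set.empty_subset _
  | succ n ih => exact fun i q hq => ⟨hq.1, hf _ _ _ _ (ih (i + 1)) hq.2⟩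

theorem layer_mono (hf : ∀ i q Y Z, Y ⊆ Z → f i q Y → f i q Z) (i : ℕ) :
    Monotone fun n => layer P f n i :=
  monotone_nat_of_le_succ fun n => layer_succ hf n i

/-- A proper subset of the domain lying strictly below its complement is a strict initial
segment `{r' | r' ≺ r}`. -/
theorem exists_eq_strict_below [Finite Q] {D E : Set Q} {le : Q → Q → Prop}
    (hle : IsTotalPreorderOn D le) (hE : E ⊆ D) (hDE : ¬ D ⊆ E)
    (h : ∀ a ∈ E, ∀ b ∈ D, b ∉ E → StrictOf le a b) :
    ∃ r ∈ D, {r' | r' ∈ D ∧ StrictOf le r' r} = E := by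
  obtain ⟨x, hxD, hxE⟩ := Set.not_subset.1 hDE
  have : IsTrans Q (StrictOf le) :=
    ⟨fun a b c hab hbc => ⟨hle.2.2.1 _ _ _ hab.1 hbc.1,
      fun hca => hab.2 (hle.2.2.1 _ _ _ hbc.1 hca)⟩⟩
  have : Std.Irrefl (StrictOf le) := ⟨fun a ha => ha.2 ha.1⟩
  have wf : WellFounded (StrictOf le) := Finite.wellFounded_of_trans_of_irrefl _
  obtain ⟨r, ⟨hrD, hrE⟩, hmin⟩ := wf.has_min {b | b ∈ D ∧ b ∉ E} ⟨x, hxD, hxE⟩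
  refine ⟨r, hrD, ?_⟩
  ext s
  constructor
  · rintro ⟨hsD, hs⟩
    by_contra hsE
    exact hmin s ⟨hsD, hsE⟩ hs
  · exact fun hs => ⟨hE hs, h s hs r hrD hrE⟩

/-- The layers exhaust the domains if the only family `X i ⊆ P i` all of whose states need some
state of `X (i + 1)` to satisfy their condition is the empty one. -/
theorem exists_mem_layer [Finite Q] (hf : ∀ i q Y Z, Y ⊆ Z → f i q Y → f i q Z)
    (hX : ∀ X : ℕ → Set Q, (∀ i, X i ⊆ P i) →
      (∀ i, ∀ x ∈ X i, ¬ f i x (P (i + 1) \ X (i + 1))) → ∀ i, X i = ∅)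
    (i : ℕ) (q : Q) (hq : q ∈ P i) : ∃ n, q ∈ layer P f n i := by
  by_contra hcon
  have := hX (fun i => {q | q ∈ P i ∧ ∀ n, q ∉ layer P f n i}) (fun i q hq => hq.1) ?_ i
  · exact (Set.eq_empty_iff_forall_notMem.1 this) q ⟨hq, not_exists.1 hcon⟩
  · rintro j x ⟨hxP, hx⟩ hfx
    -- The increasing sequence of layers at level `j + 1` is stationary, as `Q` is finite.
    obtain ⟨N, hN⟩ := WellFoundedGT.monotone_chain_condition
      (⟨fun n => layer P f n (j + 1), layer_mono hf (j + 1)⟩ : ℕ →o Set Q)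
    refine hx (N + 1) ⟨hxP, hf _ _ _ _ ?_ hfx⟩
    rintro y ⟨hyP, hy⟩
    have hy' : ∃ n, y ∈ layer P f n (j + 1) := by
      by_contra h
      exact hy ⟨hyP, not_exists.1 h⟩
    obtain ⟨n, hn⟩ := hy'
    have h1 : y ∈ layer P f (max n N) (j + 1) := layer_mono hf _ (le_max_left n N) hn
    have h2 : layer P f N (j + 1) = layer P f (max n N) (j + 1) := hN _ (le_max_right n N)
    rw [h2]
    exact h1

/-- The first layer containing a given state is a successor layer. -/
theorem exists_first_layer {i n : ℕ} {q : Q} (h : q ∈ layer P f n i) :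
    ∃ m, m < n ∧ q ∈ layer P f (m + 1) i ∧ q ∉ layer P f m i := by
  induction n with
  | zero => exact absurd h (Set.notMem_empty q)
  | succ n ih =>
    by_cases hq : q ∈ layer P f n i
    · obtain ⟨m, hm, h'⟩ := ih hq
      exact ⟨m, by omega, h'⟩
    · exact ⟨n, by omega, h, hq⟩

theorem mem_layer_of_separated (hf : ∀ i q Y Z, Y ⊆ Z → f i q Y → f i q Z) {i k m : ℕ} {a b : Q}
    (ha : a ∈ layer P f k i) (hb : b ∉ layer P f k i) (hbm : b ∈ layer P f (m + 1) i) :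
    a ∈ layer P f m i := by
  refine layer_mono hf i ?_ ha
  by_contra hlt
  exact hb (layer_mono hf i (show m + 1 ≤ k by omega) hbm)

/-- Every consistent sequence places a layer strictly below its complement. -/
theorem strict_of_layer [Finite Q]
    (hP : ∀ i, ∀ q ∈ P i, f i q (P (i + 1))) (hf : ∀ i q Y Z, Y ⊆ Z → f i q Y → f i q Z)
    {le : ℕ → Q → Q → Prop} (hle : ConsistentFor P f le) (k : ℕ) :
    ∀ i, ∀ q ∈ layer P f k i, ∀ q' ∈ P i, q' ∉ layer P f k i → StrictOf (le i) q q' := by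
  induction k with
  | zero => exact fun i q hq => absurd hq (Set.notMem_empty q)
  | succ k ih =>
    intro i q hq q' hq' hn
    have hne : ¬ P (i + 1) ⊆ layer P f k (i + 1) := fun hsub =>
      hn ⟨hq', hf _ _ _ _ hsub (hP i q' hq')⟩
    obtain ⟨r, hr, hEq⟩ :=
      exists_eq_strict_below (hle (i + 1)).1 (layer_subset k (i + 1)) hne (ih (i + 1))
    refine ((hle i).2 q hq.1 q' hq').2 ⟨r, hr, ?_⟩
    rw [hEq]
    exact ⟨hq.2, fun h => hn ⟨hq', h⟩⟩

/-- In a consistent sequence, whatever lies strictly below a state of a layer enters the layers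
earlier than that state. -/
theorem layer_of_strict (hf : ∀ i q Y Z, Y ⊆ Z → f i q Y → f i q Z)
    {le : ℕ → Q → Q → Prop} (hle : ConsistentFor P f le) (n : ℕ) :
    ∀ i, ∀ q ∈ P i, ∀ q' ∈ layer P f n i, StrictOf (le i) q q' →
      ∃ k, q ∈ layer P f k i ∧ q' ∉ layer P f k i := by
  induction n with
  | zero => exact fun i q _ q' hq' => absurd hq' (Set.notMem_empty q')
  | succ n ih =>
    intro i q hq q' hq' hs
    by_cases hq'n : q' ∈ layer P f n i
    · exact ih i q hq q' hq'n hs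
    obtain ⟨r, hr, h1, h2⟩ := ((hle i).2 q hq q' hq'.1).1 hs
    -- The segment below `r` does not contain layer `n`, so it lies below some `s` of layer `n`.
    obtain ⟨s, hs, hsr⟩ := Set.not_subset.1 fun hsub => h2 (hf _ _ _ _ hsub hq'.2)
    have hsP := layer_subset n (i + 1) hs
    obtain ⟨-, -, htr, htot⟩ := (hle (i + 1)).1
    have hrs : le (i + 1) r s := by
      by_contra hrs
      exact hsr ⟨hsP, (htot r hr s hsP).resolve_left hrs, hrs⟩
    obtain ⟨m, hmn, hm1, -⟩ := exists_first_layer hs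
    refine ⟨m + 1, ⟨hq, hf _ _ _ _ ?_ h1⟩, fun h => hq'n (layer_mono hf i hmn h)⟩
    rintro t ⟨htP, ht⟩
    obtain ⟨k, hk1, hk2⟩ := ih (i + 1) t htP s hs
      ⟨htr _ _ _ ht.1 hrs, fun hst => ht.2 (htr _ _ _ hrs hst)⟩
    exact mem_layer_of_separated hf hk1 hk2 hm1

/-- Comparing states by the first layer that contains them. -/
def layerLE (P : ℕ → Set Q) (f : ℕ → Q → Set Q → Prop) (i : ℕ) (p q : Q) : Prop :=
  p ∈ P i ∧ q ∈ P i ∧ ∀ n, q ∈ layer P f n i → p ∈ layer P f n i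

theorem strictOf_layerLE (hf : ∀ i q Y Z, Y ⊆ Z → f i q Y → f i q Z) {i : ℕ} {p q : Q}
    (hp : p ∈ P i) (hq : q ∈ P i) :
    StrictOf (layerLE P f i) p q ↔ ∃ n, p ∈ layer P f n i ∧ q ∉ layer P f n i := by
  constructor
  · rintro ⟨-, h⟩
    by_contra hcon
    push Not at hcon
    exact h ⟨hq, hp, hcon⟩
  · rintro ⟨n, hpn, hqn⟩
    refine ⟨⟨hp, hq, fun m hm => ?_⟩, fun h => hqn (h.2.2 n hpn)⟩
    rcases le_total n m with h | h
    · exact layer_mono hf i h hpn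
    · exact absurd (layer_mono hf i h hm) hqn

theorem consistentFor_layerLE [Finite Q]
    (hP : ∀ i, ∀ q ∈ P i, f i q (P (i + 1))) (hf : ∀ i q Y Z, Y ⊆ Z → f i q Y → f i q Z)
    (hex : ∀ i, ∀ q ∈ P i, ∃ n, q ∈ layer P f n i) :
    ConsistentFor P f (layerLE P f) := by
  have htot : ∀ i, IsTotalPreorderOn (P i) (layerLE P f i) := by
    refine fun i => ⟨fun p q h => ⟨h.1, h.2.1⟩, fun p hp => ⟨hp, hp, fun _ h => h⟩,
      fun p q r hpq hqr => ⟨hpq.1, hqr.2.1, fun n h => hpq.2.2 n (hqr.2.2 n h)⟩,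
      fun p hp q hq => ?_⟩
    by_contra! h
    exact h.1 ((strictOf_layerLE hf hp hq).2 (by
      by_contra! h'
      exact h.2 ⟨hq, hp, h'⟩)).1
  refine fun i => ⟨htot i, fun q hq q' hq' => ?_⟩
  rw [strictOf_layerLE hf hq hq']
  constructor
  · rintro ⟨n, hn, hn'⟩
    cases n with
    | zero => exact absurd hn (Set.notMem_empty q)
    | succ k =>
      have hne : ¬ P (i + 1) ⊆ layer P f k (i + 1) := fun hsub =>
        hn' ⟨hq', hf _ _ _ _ hsub (hP i q' hq')⟩
      obtain ⟨r, hr, hEq⟩ := exists_eq_strict_below (htot (i + 1)) (layer_subset k (i + 1)) hne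
        fun a ha b hb hb' => (strictOf_layerLE hf (layer_subset k (i + 1) ha) hb).2 ⟨k, ha, hb'⟩
      refine ⟨r, hr, ?_⟩
      rw [hEq]
      exact ⟨hn.2, fun h => hn' ⟨hq', h⟩⟩
  · rintro ⟨r, hr, h1, h2⟩
    obtain ⟨n, hn⟩ := hex (i + 1) r hr
    obtain ⟨m, -, hm1, hm⟩ := exists_first_layer hn
    have hEq : {r' | r' ∈ P (i + 1) ∧ StrictOf (layerLE P f (i + 1)) r' r} =
        layer P f m (i + 1) := by
      ext s
      constructor
      · rintro ⟨hsP, hs⟩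
        obtain ⟨k, hk1, hk2⟩ := (strictOf_layerLE hf hsP hr).1 hs
        exact mem_layer_of_separated hf hk1 hk2 hm1
      · intro hs
        have hsP := layer_subset m (i + 1) hs
        exact ⟨hsP, (strictOf_layerLE hf hsP hr).2 ⟨m, hs, hm⟩⟩
    rw [hEq] at h1 h2
    exact ⟨m + 1, ⟨hq, h1⟩, fun h => h2 h.2⟩

theorem existsUnique_consistent [Finite Q]
    (hP : ∀ i, ∀ q ∈ P i, f i q (P (i + 1))) (hf : ∀ i q Y Z, Y ⊆ Z → f i q Y → f i q Z)
    (hX : ∀ X : ℕ → Set Q, (∀ i, X i ⊆ P i) →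
      (∀ i, ∀ x ∈ X i, ¬ f i x (P (i + 1) \ X (i + 1))) → ∀ i, X i = ∅) :
    ∃! le, ConsistentFor P f le := by
  have hex := exists_mem_layer hf hX
  refine ⟨layerLE P f, consistentFor_layerLE hP hf hex, fun le hle => ?_⟩
  have key : ∀ i, ∀ p ∈ P i, ∀ q ∈ P i,
      (StrictOf (le i) p q ↔ StrictOf (layerLE P f i) p q) := by
    intro i p hp q hq
    rw [strictOf_layerLE hf hp hq]
    constructor
    · obtain ⟨n, hn⟩ := hex i q hq
      exact layer_of_strict hf hle n i p hp q hn
    · rintro ⟨k, hk1, hk2⟩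
      exact strict_of_layer hP hf hle k i p hk1 q hq hk2
  -- A total preorder is determined by its domain and its strict part.
  have det : ∀ {D : Set Q} {r : Q → Q → Prop}, IsTotalPreorderOn D r → ∀ p q,
      (r p q ↔ p ∈ D ∧ q ∈ D ∧ ¬ StrictOf r q p) := by
    intro D r hr p q
    constructor
    · exact fun h => ⟨(hr.1 p q h).1, (hr.1 p q h).2, fun h' => h'.2 h⟩
    · rintro ⟨hp, hq, h⟩
      by_contra hpq
      exact h ⟨(hr.2.2.2 p hp q hq).resolve_left hpq, hpq⟩
  funext i p q
  refine propext ?_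
  rw [det (hle i).1, det (consistentFor_layerLE hP hf hex i).1]
  exact and_congr_right fun hp => and_congr_right fun hq => not_congr (key i q hq p hp)

end Layers

/-! ### Memoryless accepting strategies -/

section Strategies

variable {α Q : Type*} {M : ABA α Q} {w : ℕ → α}

/-- `E` is an accepting strategy on the vertices `(q, ℓ)` with `q ∈ X ℓ`: its edges stay in `X`,
the successors of a vertex satisfy the transition formula, and every infinite path, starting at any
level, visits accepting states infinitely often. Levels are positions of the full word `w`. -/
def IsStrategy (M : ABA α Q) (w : ℕ → α) (X : ℕ → Set Q) (E : ℕ → Q → Q → Prop) : Prop :=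
  (∀ ℓ, ∀ x ∈ X ℓ, PosBool.Sat {y | E ℓ x y} (M.delta x (w ℓ))) ∧
  (∀ ℓ x y, E ℓ x y → x ∈ X ℓ ∧ y ∈ X (ℓ + 1)) ∧
  (∀ N (b : ℕ → Q), (∀ ℓ, N ≤ ℓ → E ℓ (b ℓ) (b (ℓ + 1))) → ∀ n, ∃ k, n ≤ k ∧ b k ∈ M.acc)

theorem IsStrategy.subset_QSeq {X : ℕ → Set Q} {E : ℕ → Q → Q → Prop}
    (h : IsStrategy M w X E) (m : ℕ) : X m ⊆ QSeq M w m := by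
  intro q hq
  refine ⟨⟨fun k => X (m + k), fun k => E (m + k), hq, fun ℓ x y hxy => (h.2.1 _ x y hxy).1,
    fun ℓ x y hxy => (h.2.1 _ x y hxy).2, fun ℓ x hx => h.1 _ x hx⟩, ?_⟩
  rintro b ⟨-, hb⟩ n
  obtain ⟨k, hk, hacc⟩ := h.2.2 m (fun ℓ => b (ℓ - m)) (fun ℓ hℓ => by
    obtain ⟨j, rfl⟩ := Nat.exists_eq_add_of_le hℓ
    have := hb j
    simpa [show m + j + 1 - m = j + 1 by omega] using this) (m + n)
  exact ⟨k - m, by omega, hacc⟩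

/-- The vertices of level `k` of a run DAG that are reachable from the initial vertex. -/
def ABA.RunDAG.reachable {M : ABA α Q} {w : ℕ → α} (G : M.RunDAG w) : ℕ → Set Q
  | 0 => {M.init}
  | k + 1 => {y | ∃ x ∈ G.reachable k, G.E k x y}

theorem ABA.RunDAG.reachable_subset (G : M.RunDAG w) (k : ℕ) : G.reachable k ⊆ G.V k := by
  cases k with
  | zero =>
    rintro x rfl
    exact G.init_mem
  | succ k =>
    rintro y ⟨x, -, h⟩
    exact G.edge_tgt k x y h

/-- Every infinite path starting at a reachable vertex is a tail of an ω-branch. -/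
theorem ABA.RunDAG.exists_branch (G : M.RunDAG w) (k : ℕ) :
    ∀ c : ℕ → Q, c 0 ∈ G.reachable k → (∀ n, G.E (k + n) (c n) (c (n + 1))) →
      ∃ b, G.IsBranch b ∧ ∀ n, b (k + n) = c n := by
  induction k with
  | zero =>
    intro c h0 hc
    exact ⟨c, ⟨h0, fun n => by simpa using hc n⟩, fun n => by simp⟩
  | succ k ih =>
    rintro c ⟨x, hx, hxc⟩ hc
    obtain ⟨b, hb, hbc⟩ := ih (fun n => Nat.casesOn n x c) hx (fun n => by
      cases n with
      | zero => exact hxc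
      | succ n =>
        have := hc n
        rwa [show k + 1 + n = k + (n + 1) by omega] at this)
    refine ⟨b, hb, fun n => ?_⟩
    rw [show k + 1 + n = k + (n + 1) by omega]
    exact hbc (n + 1)

theorem exists_strategy_of_mem_QSeq {m : ℕ} {q : Q} (hq : q ∈ QSeq M w m) :
    ∃ X E, IsStrategy M w X E ∧ q ∈ X m := by
  obtain ⟨G, hG⟩ := hq
  refine ⟨fun ℓ => {x | m ≤ ℓ ∧ x ∈ G.reachable (ℓ - m)},
    fun ℓ x y => m ≤ ℓ ∧ x ∈ G.reachable (ℓ - m) ∧ G.E (ℓ - m) x y, ⟨?_, ?_, ?_⟩, le_rfl, ?_⟩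
  · rintro ℓ x ⟨hℓ, hx⟩
    have h := G.sat _ x (G.reachable_subset _ hx)
    rw [show suffix w m (ℓ - m) = w ℓ from congrArg w (Nat.add_sub_cancel' hℓ)] at h
    refine PosBool.Sat.mono ?_ h
    exact fun y hy => ⟨hℓ, hx, hy⟩
  · rintro ℓ x y ⟨hℓ, hx, hxy⟩
    refine ⟨⟨hℓ, hx⟩, by omega, ?_⟩
    rw [show ℓ + 1 - m = ℓ - m + 1 by omega]
    exact ⟨x, hx, hxy⟩
  · intro N b hb n
    have hN := hb N le_rfl
    obtain ⟨b', hb', hbb⟩ := G.exists_branch (N - m) (fun k => b (N + k)) hN.2.1 (fun k => by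
      have := (hb (N + k) (by omega)).2.2
      rwa [show N + k - m = N - m + k by omega] at this)
    obtain ⟨k, hk, hacc⟩ := hG b' hb' (N - m + n)
    refine ⟨N + (k - (N - m)), by omega, ?_⟩
    rw [← hbb, show N - m + (k - (N - m)) = k by omega]
    exact hacc
  · simp [ABA.RunDAG.reachable, ABA.setInit]

/-- There is a single accepting strategy on all vertices from which `M` accepts. -/
theorem exists_uniform_strategy [Finite Q] (M : ABA α Q) (w : ℕ → α) :
    ∃ E, IsStrategy M w (QSeq M w) E := by
  have h : ∀ p : ℕ × Q, ∃ X E, IsStrategy M w X E ∧ (p.2 ∈ QSeq M w p.1 → p.2 ∈ X p.1) := by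
    intro p
    by_cases hp : p.2 ∈ QSeq M w p.1
    · obtain ⟨X, E, h, hX⟩ := exists_strategy_of_mem_QSeq hp
      exact ⟨X, E, h, fun _ => hX⟩
    · exact ⟨fun _ => ∅, fun _ _ _ => False, ⟨fun _ _ hx => absurd hx (Set.notMem_empty _),
        fun _ _ _ hx => hx.elim, fun N b hb => (hb N le_rfl).elim⟩, fun h => absurd h hp⟩
  choose X E hS hX using h
  -- `X p` is the vertex set of a strategy `E p` for the vertex `p`, and is empty if there is none.
  obtain ⟨e, he⟩ := Countable.exists_injective_nat (ℕ × Q)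
  -- A vertex follows the strategy of least index among those that contain it.
  refine ⟨fun ℓ x y => ∃ p, x ∈ X p ℓ ∧ (∀ p', x ∈ X p' ℓ → e p ≤ e p') ∧ E p ℓ x y, ?_, ?_, ?_⟩
  · intro ℓ x hx
    have hne : {p | x ∈ X p ℓ}.Nonempty := ⟨(ℓ, x), hX (ℓ, x) hx⟩
    obtain ⟨p, hp, hmin⟩ := (measure e).wf.has_min _ hne
    refine PosBool.Sat.mono ?_ ((hS p).1 ℓ x hp)
    exact fun y hy => ⟨p, hp, fun p' hp' => not_lt.1 (hmin p' hp'), hy⟩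
  · rintro ℓ x y ⟨p, hp, -, hxy⟩
    exact ⟨(hS p).subset_QSeq ℓ hp, (hS p).subset_QSeq (ℓ + 1) ((hS p).2.1 ℓ x y hxy).2⟩
  · intro N b hb
    choose p hp hmin hE using hb
    have hstep : ∀ ℓ (hℓ : N ≤ ℓ), e (p (ℓ + 1) (by omega)) ≤ e (p ℓ hℓ) := fun ℓ hℓ =>
      hmin _ _ _ ((hS _).2.1 _ _ _ (hE ℓ hℓ)).2
    -- From the level where the index is least, it is constant.
    obtain ⟨⟨K, hK⟩, -, hKmin⟩ := (measure fun ℓ : {ℓ // N ≤ ℓ} => e (p ℓ.1 ℓ.2)).wf.has_min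
      Set.univ ⟨⟨N, le_rfl⟩, trivial⟩
    have hle : ∀ j, e (p (K + j) (by omega)) ≤ e (p K hK) := by
      intro j
      induction j with
      | zero => exact le_rfl
      | succ j ih => exact (hstep (K + j) (by omega)).trans ih
    have hconst : ∀ j, p (K + j) (by omega) = p K hK := fun j =>
      he (le_antisymm (hle j) (not_lt.1 (hKmin ⟨K + j, by omega⟩ trivial)))
    refine (hS (p K hK)).2.2 K b fun ℓ hℓ => ?_
    obtain ⟨j, rfl⟩ := Nat.exists_eq_add_of_le hℓ
    rw [← hconst j]
    exact hE _ _

/-- A coinduction principle for acceptance: states that can be kept inside `Y` until they enter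
`Q₁` are accepted, provided that paths staying in `Y` forever are accepting. -/
theorem subset_QSeq_of_step [Finite Q] {Y : ℕ → Set Q}
    (hY : ∀ m, ∀ y ∈ Y m, PosBool.Sat (QSeq M w (m + 1) ∪ Y (m + 1)) (M.delta y (w m)))
    (hacc : ∀ N (b : ℕ → Q), (∀ ℓ, N ≤ ℓ → b ℓ ∈ Y ℓ) → ∀ n, ∃ k, n ≤ k ∧ b k ∈ M.acc) (m : ℕ) :
    Y m ⊆ QSeq M w m := by
  obtain ⟨E, hE1, hE2, hE3⟩ := exists_uniform_strategy M w
  have hS : IsStrategy M w (fun ℓ => QSeq M w ℓ ∪ Y ℓ) (fun ℓ x y => E ℓ x y ∨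
      (x ∉ QSeq M w ℓ ∧ x ∈ Y ℓ ∧ y ∈ QSeq M w (ℓ + 1) ∪ Y (ℓ + 1))) := by
    refine ⟨?_, ?_, ?_⟩
    · intro ℓ x hx
      by_cases hxQ : x ∈ QSeq M w ℓ
      · exact PosBool.Sat.mono (fun y hy => Or.inl hy) (hE1 ℓ x hxQ)
      · have hxY := hx.resolve_left hxQ
        exact PosBool.Sat.mono (fun y hy => Or.inr ⟨hxQ, hxY, hy⟩) (hY ℓ x hxY)
    · rintro ℓ x y (h | ⟨-, h1, h2⟩)
      · exact ⟨Or.inl (hE2 _ _ _ h).1, Or.inl (hE2 _ _ _ h).2⟩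
      · exact ⟨Or.inr h1, h2⟩
    · intro N b hb
      by_cases h : ∃ K, N ≤ K ∧ b K ∈ QSeq M w K
      · obtain ⟨K, hNK, hK⟩ := h
        have hall : ∀ j, b (K + j) ∈ QSeq M w (K + j) := by
          intro j
          induction j with
          | zero => exact hK
          | succ j ih =>
            rcases hb (K + j) (by omega) with h | h
            · exact (hE2 _ _ _ h).2
            · exact absurd ih h.1
        refine hE3 K b fun ℓ hℓ => (hb ℓ (by omega)).resolve_right fun h => h.1 ?_
        obtain ⟨j, rfl⟩ := Nat.exists_eq_add_of_le hℓ
        exact hall j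
      · push Not at h
        refine hacc N b fun ℓ hℓ => ?_
        rcases hb ℓ hℓ with h' | h'
        · exact absurd (hE2 _ _ _ h').1 (h ℓ hℓ)
        · exact h'.2.1
  exact fun y hy => hS.subset_QSeq m (Or.inr hy)

/-- Unfolding acceptance by one step. -/
theorem mem_QSeq_iff [Finite Q] {q : Q} {i : ℕ} :
    q ∈ QSeq M w i ↔ PosBool.Sat (QSeq M w (i + 1)) (M.delta q (w i)) := by
  constructor
  · intro hq
    obtain ⟨E, hE1, hE2, -⟩ := exists_uniform_strategy M w
    exact PosBool.Sat.mono (fun y hy => (hE2 _ _ _ hy).2) (hE1 i q hq)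
  · intro h
    refine subset_QSeq_of_step (Y := fun m => {x | m = i ∧ x = q}) ?_ ?_ i ⟨rfl, rfl⟩
    · rintro m y ⟨rfl, rfl⟩
      exact PosBool.Sat.mono Set.subset_union_left h
    · intro N b hb
      -- A path cannot stay in `Y` beyond level `i`.
      have h1 := (hb (N + i + 1) (by omega)).1
      omega

end Strategies

/-! ### The two rules -/

theorem ABA.mem_sccOf {α Q : Type*} (M : ABA α Q) (q : Q) : q ∈ M.sccOf q :=
  ⟨Relation.ReflTransGen.refl, Relation.ReflTransGen.refl⟩

theorem ABA.sccOf_subset {α Q : Type*} {M : ABA α Q} {p q : Q} (h : p ∈ M.sccOf q) :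
    M.sccOf p ⊆ M.sccOf q :=
  fun _ hr => ⟨h.1.trans hr.1, hr.2.trans h.2⟩

/-- Rejecting SCCs: states never entering a layer would give a path of the uniform strategy that
stays in `C` forever. -/
theorem existsUnique_rejecting {α Q : Type*} [Finite Q] (M : ABA α Q) (w : ℕ → α) {C : Set Q}
    (hC : ∀ q ∈ C, q ∉ M.acc) :
    ∃! le : ℕ → Q → Q → Prop, ∀ i, IsTotalPreorderOn (C ∩ QSeq M w i) (le i) ∧
      RuleR1 M C (w i) (QSeq M w i) (QSeq M w (i + 1)) (le i) (le (i + 1)) := by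
  refine existsUnique_consistent (P := fun i => C ∩ QSeq M w i)
    (f := fun i q D => PosBool.Sat (D ∪ (QSeq M w (i + 1) \ C)) (M.delta q (w i))) ?_ ?_ ?_
  · rintro i q ⟨-, hq⟩
    refine PosBool.Sat.mono (fun y hy => ?_) (mem_QSeq_iff.1 hq)
    by_cases hyC : y ∈ C
    · exact Or.inl ⟨hyC, hy⟩
    · exact Or.inr ⟨hy, hyC⟩
  · exact fun i q Y Z hYZ h => PosBool.Sat.mono (Set.union_subset_union_left _ hYZ) h
  · intro X hXP hX i
    by_contra hne
    obtain ⟨x₀, hx₀⟩ := Set.nonempty_iff_ne_empty.2 hne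
    obtain ⟨E, hE1, hE2, hE3⟩ := exists_uniform_strategy M w
    have hstep : ∀ ℓ, ∀ x ∈ X ℓ, ∃ y ∈ X (ℓ + 1), E ℓ x y := by
      intro ℓ x hx
      by_contra! hcon
      refine hX ℓ x hx (PosBool.Sat.mono (fun y hy => ?_) (hE1 ℓ x (hXP ℓ hx).2))
      have hyQ := (hE2 _ _ _ hy).2
      by_cases hyC : y ∈ C
      · exact Or.inl ⟨⟨hyC, hyQ⟩, fun hyX => hcon y hyX hy⟩
      · exact Or.inr ⟨hyQ, hyC⟩
    choose g hg hgE using hstep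
    let c : ∀ k, {x // x ∈ X (i + k)} := fun k =>
      Nat.rec ⟨x₀, hx₀⟩ (fun k x => ⟨g (i + k) x.1 x.2, hg _ _ _⟩) k
    obtain ⟨k, hk, hacc⟩ := hE3 i (fun ℓ => (c (ℓ - i)).1) (fun ℓ hℓ => by
      obtain ⟨j, rfl⟩ := Nat.exists_eq_add_of_le hℓ
      rw [show i + j + 1 - i = j + 1 by omega, show i + j - i = j by omega]
      exact hgE (i + j) (c j).1 (c j).2) i
    exact hC _ (hXP _ (c (k - i)).2).1 hacc

/-- Accepting SCCs: states outside `Q₁` never entering a layer could stay in `C` until they reach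
`Q₁`, and would be accepted. -/
theorem existsUnique_accepting {α Q : Type*} [Finite Q] (M : ABA α Q) (w : ℕ → α) {C : Set Q}
    (hC : C ⊆ M.acc) :
    ∃! le : ℕ → Q → Q → Prop, ∀ i, IsTotalPreorderOn (C \ QSeq M w i) (le i) ∧
      RuleR2 M C (w i) (QSeq M w i) (QSeq M w (i + 1)) (le i) (le (i + 1)) := by
  refine existsUnique_consistent (P := fun i => C \ QSeq M w i)
    (f := fun i q D => PosBool.Sat (D ∪ (QSeq M w (i + 1) ∪ C)ᶜ) (M.dual.delta q (w i))) ?_ ?_ ?_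
  · rintro i q ⟨-, hq⟩
    rw [mem_QSeq_iff, ← PosBool.sat_dual_compl] at hq
    refine PosBool.Sat.mono (fun y hy => ?_) hq
    by_cases hyC : y ∈ C
    · exact Or.inl ⟨hyC, hy⟩
    · exact Or.inr fun h => h.elim hy hyC
  · exact fun i q Y Z hYZ h => PosBool.Sat.mono (Set.union_subset_union_left _ hYZ) h
  · intro X hXP hX i
    have hsub : X i ⊆ QSeq M w i := by
      refine subset_QSeq_of_step (fun m y hy => ?_)
        (fun N b hb n => ⟨max N n, le_max_right _ _, hC (hXP _ (hb _ (le_max_left _ _))).1⟩) i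
      by_contra hns
      rw [← PosBool.sat_dual_compl] at hns
      refine hX m y hy (PosBool.Sat.mono (fun z hz => ?_) hns)
      by_cases hzC : z ∈ C
      · exact Or.inl ⟨⟨hzC, fun h => hz (Or.inl h)⟩, fun h => hz (Or.inr h)⟩
      · exact Or.inr fun h => h.elim (fun h => hz (Or.inl h)) hzC
    exact Set.eq_empty_iff_forall_notMem.2 fun x hx => (hXP i hx).2 (hsub hx)

/-- existence and uniqueness of the consistent sequence of families of
total preorders for `R_w`. -/
theorem unique_preorders {α Q : Type} [Fintype α] [Fintype Q] (M : ABA α Q)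
    (hweak : M.IsWeak) (hcomp : M.Complete) (w : ℕ → α) :
    ∃ pre : ℕ → Set Q → Q → Q → Prop,
      ConsistentPre M w (QSeq M w) pre ∧
      ∀ pre' : ℕ → Set Q → Q → Q → Prop, ConsistentPre M w (QSeq M w) pre' →
        ∀ (i : ℕ) (C : Set Q), M.IsSCC C → pre i C = pre' i C := by
  have hSCC : ∀ C : Set Q, M.IsSCC C → ∃! le : ℕ → Q → Q → Prop, ∀ i,
      (C ⊆ M.RejPart → IsTotalPreorderOn (C ∩ QSeq M w i) (le i) ∧
        RuleR1 M C (w i) (QSeq M w i) (QSeq M w (i + 1)) (le i) (le (i + 1))) ∧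
      (C ⊆ M.AccPart → IsTotalPreorderOn (C \ QSeq M w i) (le i) ∧
        RuleR2 M C (w i) (QSeq M w i) (QSeq M w (i + 1)) (le i) (le (i + 1))) := by
    rintro C ⟨q, rfl⟩
    rcases hweak q with h | h
    · have hA : M.sccOf q ⊆ M.AccPart := fun p hp => (ABA.sccOf_subset hp).trans h
      have hR : ¬ M.sccOf q ⊆ M.RejPart := fun hR =>
        (Set.eq_empty_iff_forall_notMem.1 (hR (M.mem_sccOf q))) q
          ⟨M.mem_sccOf q, h (M.mem_sccOf q)⟩
      simpa only [hA, hR, true_implies, false_implies, true_and] using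
        existsUnique_accepting M w h
    · have hn : ∀ p ∈ M.sccOf q, p ∉ M.acc := fun p hp hpa =>
        (Set.eq_empty_iff_forall_notMem.1 h) p ⟨hp, hpa⟩
      have hR : M.sccOf q ⊆ M.RejPart := fun p hp =>
        Set.eq_empty_iff_forall_notMem.2 fun r hr => hn r (ABA.sccOf_subset hp hr.1) hr.2
      have hA : ¬ M.sccOf q ⊆ M.AccPart := fun hA =>
        hn q (M.mem_sccOf q) (hA (M.mem_sccOf q) (M.mem_sccOf q))
      simpa only [hA, hR, true_implies, false_implies, and_true] using
        existsUnique_rejecting M w hn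
  choose! le hle huniq using hSCC
  refine ⟨fun i C => le C i, fun i C hC => hle C hC i, fun pre' hpre' i C hC => ?_⟩
  exact (congrFun (huniq C hC (fun i => pre' i C) fun i => hpre' i C hC) i).symm
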